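/- Let p be an odd prime, G a finite powerful p-group, i ≥ 1 and 0 ≤ j ≤ i. Then [Ω_{i-j}(G^{p^{2+j}}), Ω_i(G^p)] ≤ (Ω_i(G^{p²}))^{p^{j+2}}. -/

import Mathlib

/-!
Everything happens in a nilpotent group `G` of exponent dividing a power of an odd number `p`, with
`⁅G, G⁆ ≤ G ^ p`. The idea is to write `V M k` for the set of all `u ^ p ^ k` with `u ^ p ^ M = 1`
and to prove that these sets are subgroups with `⁅V (M + 1) k, V M l⁆ ≤ V (M + 1) (k + l + 1)`.
Since roots can be extracted, `Ω_n(G ^ p ^ k) = V (n + k) k`. So the commutator to be bounded is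
`⁅V (i + 2) (j + 2), V (i + 1) 1⁆ ≤ V (i + 2) (j + 4)`, and the elements of the right-hand side are
the `(u ^ p ^ 2) ^ p ^ (j + 2)` with `u ^ p ^ (i + 2) = 1`.

The claim about `V` is proved by descending induction on `M`. When `p ^ M` is at least the exponent,
`V M k = G ^ p ^ k`, and the bracket relation is classical. Going down, the relation at `M + 1`
bounds double commutators so well that `p`-th powers of products obey the class-two formula
`(a * b) ^ p = a ^ p * b ^ p * ⁅a, b⁆ ^ (-p.choose 2)`, in which `p ∣ p.choose 2`. If
`w ^ p ^ M = 1`, then the conjugate `⁅v, w⁆ * w` of `w` also has trivial `p ^ M`-th power, and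
expanding that power gives `⁅v, w⁆ ^ p ^ M = 1`. Extracting roots propagates this bound on orders
along the filtration.
-/

/-- The subgroup generated by the `n`-th powers of the elements of `H`. -/
def subgroupPow {G : Type*} [Group G] (H : Subgroup G) (n : ℕ) : Subgroup G :=
  Subgroup.closure {x | ∃ h ∈ H, h ^ n = x}

/-- `Ω_i(H)`: the subgroup generated by the elements of `H` whose order divides `p ^ i`. -/
def omegaSubgroup {G : Type*} [Group G] (p i : ℕ) (H : Subgroup G) : Subgroup G :=
  Subgroup.closure {x | x ∈ H ∧ x ^ p ^ i = 1}

/-- A finite `p`-group `G` is powerful if `[G,G] ≤ G^p` when `p` is odd,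
and `[G,G] ≤ G^4` when `p = 2`. -/
def IsPowerful (p : ℕ) (G : Type*) [Group G] : Prop :=
  if p = 2 then commutator G ≤ subgroupPow (⊤ : Subgroup G) 4
  else commutator G ≤ subgroupPow (⊤ : Subgroup G) p

/-- The subgroup of `n`-th powers of the whole group is normal (indeed characteristic). -/
instance subgroupPow_top_normal {G : Type*} [Group G] (n : ℕ) :
    (subgroupPow (⊤ : Subgroup G) n).Normal := by
  constructor
  intro x hx g
  have key : Subgroup.map (MulAut.conj g).toMonoidHom (subgroupPow (⊤ : Subgroup G) n)
      ≤ subgroupPow (⊤ : Subgroup G) n := by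
    rw [subgroupPow, MonoidHom.map_closure]
    apply Subgroup.closure_le _ |>.mpr
    rintro y ⟨z, ⟨h, -, rfl⟩, rfl⟩
    exact Subgroup.subset_closure ⟨(MulAut.conj g) h, trivial, by
      simp [((MulAut.conj g).toMonoidHom.map_pow h n).symm]⟩
  have hmem : (MulAut.conj g) x ∈
      Subgroup.map (MulAut.conj g).toMonoidHom (subgroupPow (⊤ : Subgroup G) n) :=
    Subgroup.mem_map_of_mem _ hx
  simpa [MulAut.conj_apply] using key hmem

/-- A powerfully central chain `{1} = H 0 ≤ H 1 ≤ ⋯ ≤ H n = G` of length `n`: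
`[H (k+1), G] ≤ (H k)^p` for all `k < n`. -/
def IsPowerfullyCentralChain (p : ℕ) {G : Type*} [Group G] (n : ℕ) (H : ℕ → Subgroup G) : Prop :=
  H 0 = ⊥ ∧ H n = ⊤ ∧ (∀ k, k < n → H k ≤ H (k + 1)) ∧
    ∀ k, k < n → ⁅H (k + 1), (⊤ : Subgroup G)⁆ ≤ subgroupPow (H k) p

/-- A group is powerfully nilpotent if it is powerful and admits a powerfully central chain. -/
def IsPowerfullyNilpotent (p : ℕ) (G : Type*) [Group G] : Prop :=
  IsPowerful p G ∧ ∃ (n : ℕ) (H : ℕ → Subgroup G), IsPowerfullyCentralChain p n H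

/-- The powerful nilpotency class: the least possible length of a powerfully central chain. -/
noncomputable def powerfulNilpotencyClass (p : ℕ) (G : Type*) [Group G] : ℕ :=
  sInf {n | ∃ H : ℕ → Subgroup G, IsPowerfullyCentralChain p n H}
open scoped commutatorElement

section ClassTwo

variable {G : Type*} [Group G] {a b : G} {n : ℕ}

theorem commutatorElement_pow_right_eq_mul_pow (a b : G) (n : ℕ) :
    ⁅a, b ^ n⁆ = (⁅a, b⁆ * b) ^ n * (b ^ n)⁻¹ := by
  rw [← conj_eq_commutatorElement_mul, ← map_pow, conj_eq_commutatorElement_mul,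
    mul_inv_cancel_right]

theorem commutatorElement_pow_right_of_commute (h : Commute ⁅a, b⁆ b) (n : ℕ) :
    ⁅a, b ^ n⁆ = ⁅a, b⁆ ^ n := by
  rw [commutatorElement_pow_right_eq_mul_pow, h.mul_pow, mul_inv_cancel_right]

theorem mul_pow_mul_commutatorElement_pow_choose_two (ha : Commute ⁅a, b⁆ a)
    (hb : Commute ⁅a, b⁆ b) (n : ℕ) :
    (a * b) ^ n * ⁅a, b⁆ ^ n.choose 2 = a ^ n * b ^ n := by
  induction n with
  | zero => simp
  | succ n ih =>
    have hchoose : (n + 1).choose 2 = n.choose 2 + n := by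
      rw [Nat.choose_succ_succ' n 1, Nat.choose_one_right, add_comm]
    have hswap : a * b ^ n = ⁅a, b⁆ ^ n * (b ^ n * a) := by
      rw [← commutatorElement_pow_right_of_commute hb, commutatorElement_def]
      group
    have hab (m : ℕ) : Commute (⁅a, b⁆ ^ m) (a * b) := (ha.mul_right hb).pow_left m
    have hba : Commute (⁅a, b⁆ ^ n) (b ^ n * a * b) :=
      (((hb.pow_right n).mul_right ha).mul_right hb).pow_left n
    calc (a * b) ^ (n + 1) * ⁅a, b⁆ ^ (n + 1).choose 2
        = (a * b) ^ n * (a * b * ⁅a, b⁆ ^ n.choose 2) * ⁅a, b⁆ ^ n := by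
          rw [hchoose, pow_succ, pow_add]; simp only [mul_assoc]
      _ = (a * b) ^ n * ⁅a, b⁆ ^ n.choose 2 * (a * b) * ⁅a, b⁆ ^ n := by
          rw [← (hab _).eq]; simp only [mul_assoc]
      _ = a ^ n * (b ^ n * a * b * ⁅a, b⁆ ^ n) := by rw [ih]; simp only [mul_assoc]
      _ = a ^ n * (⁅a, b⁆ ^ n * (b ^ n * a)) * b := by rw [← hba.eq]; simp only [mul_assoc]
      _ = a ^ (n + 1) * b ^ (n + 1) := by
          rw [← hswap, pow_succ, pow_succ]; simp only [mul_assoc]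

theorem dvd_choose_two_of_odd (hn : Odd n) : n ∣ n.choose 2 := by
  obtain ⟨k, rfl⟩ := hn
  refine ⟨k, ?_⟩
  rw [Nat.choose_two_right, Nat.add_sub_cancel, mul_left_comm, Nat.mul_div_cancel_left _ two_pos]

theorem mul_pow_of_odd_of_commute (hn : Odd n) (hpow : ⁅a, b⁆ ^ n = 1) (ha : Commute ⁅a, b⁆ a)
    (hb : Commute ⁅a, b⁆ b) : (a * b) ^ n = a ^ n * b ^ n := by
  obtain ⟨k, hk⟩ := dvd_choose_two_of_odd hn
  have h := mul_pow_mul_commutatorElement_pow_choose_two ha hb n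
  rwa [hk, pow_mul, hpow, one_pow, mul_one] at h

end ClassTwo

section Congruence

variable {G : Type*} [Group G] {N : Subgroup G} {a b : G} {n : ℕ}

theorem commutatorElement_mem_comm : ⁅a, b⁆ ∈ N ↔ ⁅b, a⁆ ∈ N := by
  rw [← commutatorElement_inv, inv_mem_iff]

variable [N.Normal]

theorem commute_mk_iff : Commute (a : G ⧸ N) (b : G ⧸ N) ↔ ⁅a, b⁆ ∈ N := by
  rw [← commutatorElement_eq_one_iff_commute]
  exact QuotientGroup.eq_one_iff ⁅a, b⁆

theorem mk_pow_eq_one_iff : (a : G ⧸ N) ^ n = 1 ↔ a ^ n ∈ N :=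
  QuotientGroup.eq_one_iff (a ^ n)

theorem exists_mem_eq_mul_of_mk_eq (h : (a : G ⧸ N) = b) : ∃ e ∈ N, a = e * b :=
  ⟨a / b, QuotientGroup.eq_iff_div_mem.1 h, (div_mul_cancel a b).symm⟩

theorem mk_mul_pow_of_odd (hn : Odd n) (hpow : ⁅a, b⁆ ^ n ∈ N) (ha : ⁅⁅a, b⁆, a⁆ ∈ N)
    (hb : ⁅⁅a, b⁆, b⁆ ∈ N) : ((a : G ⧸ N) * b) ^ n = (a : G ⧸ N) ^ n * (b : G ⧸ N) ^ n :=
  mul_pow_of_odd_of_commute hn (mk_pow_eq_one_iff.2 hpow) (commute_mk_iff.2 ha)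
    (commute_mk_iff.2 hb)

theorem commutatorElement_pow_right_mem (hpow : ⁅a, b⁆ ^ n ∈ N) (hb : ⁅⁅a, b⁆, b⁆ ∈ N) :
    ⁅a, b ^ n⁆ ∈ N := by
  have h : ⁅(a : G ⧸ N), (b : G ⧸ N) ^ n⁆ = 1 :=
    (commutatorElement_pow_right_of_commute (commute_mk_iff.2 hb) n).trans
      (mk_pow_eq_one_iff.2 hpow)
  exact (QuotientGroup.eq_one_iff ⁅a, b ^ n⁆).1 h

theorem commutatorElement_pow_right_mem_of_odd (hn : Odd n) (hpow : ⁅a, b⁆ ^ n ∈ N)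
    (hpow' : ⁅⁅a, b⁆, b⁆ ^ n ∈ N) (ha : ⁅⁅⁅a, b⁆, b⁆, ⁅a, b⁆⁆ ∈ N)
    (hb : ⁅⁅⁅a, b⁆, b⁆, b⁆ ∈ N) : ⁅a, b ^ n⁆ ∈ N := by
  rw [commutatorElement_pow_right_eq_mul_pow, ← div_eq_mul_inv, ← QuotientGroup.eq_iff_div_mem]
  calc (((⁅a, b⁆ * b) ^ n : G) : G ⧸ N)
      = (⁅a, b⁆ : G) ^ n * (b : G ⧸ N) ^ n := mk_mul_pow_of_odd hn hpow' ha hb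
    _ = (b ^ n : G) := by rw [mk_pow_eq_one_iff.2 hpow, one_mul, QuotientGroup.mk_pow]

theorem mk_mul_pow_pow_of_odd {p : ℕ} (hp : Odd p) {N : ℕ → Subgroup G} [∀ t, (N t).Normal]
    {x y : G} (hpow : ∀ t, ∀ z ∈ N t, z ^ p ∈ N (t + 1))
    (hxy : ∀ t, ⁅x ^ p ^ t, y ^ p ^ t⁆ ∈ N t)
    (hx : ∀ t, ∀ z ∈ N t, ⁅z, x ^ p ^ t⁆ ∈ N (t + 1))
    (hy : ∀ t, ∀ z ∈ N t, ⁅z, y ^ p ^ t⁆ ∈ N (t + 1)) (t : ℕ) :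
    (((x * y) ^ p ^ t : G) : G ⧸ N t) = (x ^ p ^ t * y ^ p ^ t : G) := by
  induction t with
  | zero => simp only [pow_zero, pow_one]
  | succ t ih =>
    obtain ⟨e, he, hxye⟩ := exists_mem_eq_mul_of_mk_eq ih
    set a := x ^ p ^ t
    set b := y ^ p ^ t
    have hea : Commute (e : G ⧸ N (t + 1)) (a * b : G) :=
      (commute_mk_iff.2 (hx t e he)).mul_right (commute_mk_iff.2 (hy t e he))
    calc (((x * y) ^ p ^ (t + 1) : G) : G ⧸ N (t + 1))
        = ((e : G ⧸ N (t + 1)) * (a * b : G)) ^ p := by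
          rw [pow_succ, pow_mul, hxye, QuotientGroup.mk_pow, QuotientGroup.mk_mul]
      _ = ((a : G ⧸ N (t + 1)) * b) ^ p := by
          rw [hea.mul_pow, mk_pow_eq_one_iff.2 (hpow t e he), one_mul, QuotientGroup.mk_mul]
      _ = (a : G ⧸ N (t + 1)) ^ p * (b : G ⧸ N (t + 1)) ^ p :=
          mk_mul_pow_of_odd hp (hpow t _ (hxy t)) (hx t _ (hxy t)) (hy t _ (hxy t))
      _ = (x ^ p ^ (t + 1) * y ^ p ^ (t + 1) : G) := by
          rw [pow_succ p, pow_mul, pow_mul]; rfl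

end Congruence

section SubgroupPow

variable {G : Type*} [Group G] {H N : Subgroup G} {m n : ℕ}

theorem pow_mem_subgroupPow {x : G} (hx : x ∈ H) : x ^ n ∈ subgroupPow H n :=
  Subgroup.subset_closure ⟨x, hx, rfl⟩

theorem subgroupPow_le_iff : subgroupPow H n ≤ N ↔ ∀ x ∈ H, x ^ n ∈ N := by
  refine ⟨fun h x hx => h (pow_mem_subgroupPow hx), fun h => (Subgroup.closure_le N).2 ?_⟩
  rintro _ ⟨x, hx, rfl⟩
  exact h x hx

theorem subgroupPow_le_self (H : Subgroup G) (n : ℕ) : subgroupPow H n ≤ H :=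
  subgroupPow_le_iff.2 fun _ hx => pow_mem hx n

instance subgroupPow_normal (H : Subgroup G) [hH : H.Normal] (n : ℕ) :
    (subgroupPow H n).Normal := by
  refine ⟨fun x hx g => ?_⟩
  have hconj : subgroupPow H n ≤ (subgroupPow H n).comap (MulAut.conj g).toMonoidHom :=
    subgroupPow_le_iff.2 fun y hy => by
      simpa using pow_mem_subgroupPow (n := n) (hH.conj_mem y hy g)
  exact hconj hx

theorem commutator_subgroupPow_top_le [N.Normal] (h : ∀ x ∈ H, ∀ g : G, ⁅g, x ^ n⁆ ∈ N) :
    ⁅subgroupPow H n, (⊤ : Subgroup G)⁆ ≤ N := by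
  have hcenter : subgroupPow H n ≤ (Subgroup.center (G ⧸ N)).comap (QuotientGroup.mk' N) :=
    subgroupPow_le_iff.2 fun x hx => Subgroup.mem_center_iff.2 fun q =>
      QuotientGroup.induction_on q fun g => commute_mk_iff.2 (h x hx g)
  exact Subgroup.commutator_le.2 fun y hy g _ => commutatorElement_mem_comm.1 <|
    commute_mk_iff.1 (Subgroup.mem_center_iff.1 (hcenter hy) g)

theorem pow_mem_of_mem_subgroupPow [N.Normal] (hHN : ⁅H, H⁆ ≤ N) (h : ∀ x ∈ H, x ^ (m * n) ∈ N)
    {x : G} (hx : x ∈ subgroupPow H m) : x ^ n ∈ N := by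
  induction hx using Subgroup.closure_induction with
  | mem _ hx =>
    obtain ⟨y, hy, rfl⟩ := hx
    rw [← pow_mul]
    exact h y hy
  | one => simp only [one_pow, one_mem]
  | mul x y hx hy ihx ihy =>
    have hxy : Commute (x : G ⧸ N) y := commute_mk_iff.2 <| hHN <|
      Subgroup.commutator_mem_commutator (subgroupPow_le_self H m hx) (subgroupPow_le_self H m hy)
    rw [← mk_pow_eq_one_iff] at ihx ihy ⊢
    rw [QuotientGroup.mk_mul, hxy.mul_pow, ihx, ihy, one_mul]
  | inv x _ ihx => rwa [inv_pow, inv_mem_iff]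

end SubgroupPow

section Nilpotent

variable {G : Type*} [Group G] [Group.IsNilpotent G]

theorem eq_bot_of_le_commutator_top {A : Subgroup G} (h : A ≤ ⁅A, (⊤ : Subgroup G)⁆) : A = ⊥ := by
  have hlcs (n : ℕ) : A ≤ (⊤ : Subgroup G).lowerCentralSeries n := by
    induction n with
    | zero => exact le_top
    | succ n ih => exact h.trans (Subgroup.commutator_mono ih le_rfl)
  obtain ⟨n, hn⟩ := Subgroup.nilpotent_iff_lowerCentralSeries.1 ‹Group.IsNilpotent G›
  exact le_bot_iff.1 (hn ▸ hlcs n)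

theorem le_of_le_sup_commutator_top {A B : Subgroup G} [B.Normal]
    (h : A ≤ B ⊔ ⁅A, (⊤ : Subgroup G)⁆) : A ≤ B := by
  have hmap : A.map (QuotientGroup.mk' B) ≤ ⁅A.map (QuotientGroup.mk' B), ⊤⁆ := by
    have hle := Subgroup.map_mono (f := QuotientGroup.mk' B) h
    rwa [Subgroup.map_sup, Subgroup.map_commutator, QuotientGroup.map_mk'_self, bot_sup_eq,
      Subgroup.map_top_of_surjective _ (QuotientGroup.mk'_surjective B)] at hle
  have hbot := eq_bot_of_le_commutator_top hmap
  rwa [Subgroup.map_eq_bot_iff, QuotientGroup.ker_mk'] at hbot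

end Nilpotent

section PowerfullyEmbedded

variable {G : Type*} [Group G] {p : ℕ}

/-- A subgroup `N` is powerfully embedded if `⁅N, G⁆ ≤ N ^ p`. This is the condition for odd `p`;
normality of `N` is a consequence. -/
def IsPowerfullyEmbedded (p : ℕ) (N : Subgroup G) : Prop :=
  ⁅N, (⊤ : Subgroup G)⁆ ≤ subgroupPow N p

theorem IsPowerfullyEmbedded.commutatorElement_mem {N : Subgroup G}
    (hN : IsPowerfullyEmbedded p N) {x : G} (hx : x ∈ N) (g : G) : ⁅x, g⁆ ∈ subgroupPow N p :=
  hN (Subgroup.commutator_mem_commutator hx (Subgroup.mem_top g))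

theorem IsPowerfullyEmbedded.normal {N : Subgroup G} (hN : IsPowerfullyEmbedded p N) : N.Normal :=
  Subgroup.commutator_top_right_le_iff.1 (hN.trans (subgroupPow_le_self N p))

theorem isPowerfullyEmbedded_subgroupPow [Group.IsNilpotent G] (hp : Odd p) {N : Subgroup G}
    (hN : IsPowerfullyEmbedded p N) : IsPowerfullyEmbedded p (subgroupPow N p) := by
  have := hN.normal
  -- By nilpotency it suffices to work modulo `⁅⁅N ^ p, G⁆, G⁆`, where `⁅⁅g, x⁆, x⁆` is central.
  refine le_of_le_sup_commutator_top (commutator_subgroupPow_top_le fun x hx g => ?_)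
  have hgx : ⁅g, x⁆ ∈ subgroupPow N p :=
    commutatorElement_mem_comm.1 (hN.commutatorElement_mem hx g)
  have hgxx : ⁅⁅g, x⁆, x⁆ ∈ ⁅subgroupPow N p, (⊤ : Subgroup G)⁆ :=
    Subgroup.commutator_mem_commutator hgx (Subgroup.mem_top x)
  have hcentral (y : G) : ⁅⁅⁅g, x⁆, x⁆, y⁆ ∈ subgroupPow (subgroupPow N p) p ⊔
      ⁅⁅subgroupPow N p, (⊤ : Subgroup G)⁆, (⊤ : Subgroup G)⁆ :=
    Subgroup.mem_sup_right (Subgroup.commutator_mem_commutator hgxx (Subgroup.mem_top y))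
  exact commutatorElement_pow_right_mem_of_odd hp (Subgroup.mem_sup_left (pow_mem_subgroupPow hgx))
    (Subgroup.mem_sup_left (pow_mem_subgroupPow (Subgroup.commutator_le_left _ _ hgxx)))
    (hcentral _) (hcentral _)

end PowerfullyEmbedded

section PowerSeq

variable {G : Type*} [Group G] {p L : ℕ}

/-- The iterated power series `G, G ^ p, (G ^ p) ^ p, …` of a group. For the groups considered here
its `k`-th term is `G ^ (p ^ k)`, see `powerSeq_eq_subgroupPow`. -/
def powerSeq (p : ℕ) (G : Type*) [Group G] : ℕ → Subgroup G
  | 0 => ⊤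
  | k + 1 => subgroupPow (powerSeq p G k) p

instance powerSeq_normal (k : ℕ) : (powerSeq p G k).Normal := by
  induction k with
  | zero => exact Subgroup.normal_of_characteristic ⊤
  | succ k ih => exact subgroupPow_normal (powerSeq p G k) p

theorem powerSeq_antitone : Antitone (powerSeq p G) :=
  antitone_nat_of_succ_le fun k => subgroupPow_le_self (powerSeq p G k) p

theorem powerSeq_eq_bot_of_le {n : ℕ} (h : L ≤ n) (hL : powerSeq p G L = ⊥) :
    powerSeq p G n = ⊥ :=
  le_bot_iff.1 (hL ▸ powerSeq_antitone h)

theorem pow_mem_powerSeq_add {k : ℕ} {x : G} (hx : x ∈ powerSeq p G k) (t : ℕ) :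
    x ^ p ^ t ∈ powerSeq p G (k + t) := by
  induction t with
  | zero => simpa only [pow_zero, pow_one, add_zero] using hx
  | succ t ih =>
    rw [pow_succ, pow_mul]
    exact pow_mem_subgroupPow ih

/-- Once the series is below one term of the lower central series, its later terms have decreasing
exponent modulo the next one. -/
theorem exists_powerSeq_eq_bot [Group.IsNilpotent G] (hexp : ∀ g : G, g ^ p ^ L = 1) :
    ∃ n, powerSeq p G n = ⊥ := by
  have hlcs (c : ℕ) : ∃ n, powerSeq p G n ≤ (⊤ : Subgroup G).lowerCentralSeries c := by
    induction c with
    | zero => exact ⟨0, le_rfl⟩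
    | succ c ih =>
      obtain ⟨n, hn⟩ := ih
      have hpow (t : ℕ) : ∀ s, s + t = L → ∀ x ∈ powerSeq p G (n + t),
          x ^ p ^ s ∈ (⊤ : Subgroup G).lowerCentralSeries (c + 1) := by
        induction t with
        | zero =>
          rintro s rfl x -
          exact (hexp x).symm ▸ one_mem _
        | succ t ih =>
          intro s hs x hx
          have hcomm : ⁅powerSeq p G (n + t), powerSeq p G (n + t)⁆ ≤
              (⊤ : Subgroup G).lowerCentralSeries (c + 1) :=
            Subgroup.commutator_mono ((powerSeq_antitone (Nat.le_add_right n t)).trans hn) le_top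
          refine pow_mem_of_mem_subgroupPow hcomm (fun y hy => ?_) hx
          rw [← pow_succ']
          exact ih (s + 1) (by omega) y hy
      exact ⟨n + L, fun x hx => by simpa using hpow L 0 (zero_add L) x hx⟩
  obtain ⟨c, hc⟩ := Subgroup.nilpotent_iff_lowerCentralSeries.1 ‹Group.IsNilpotent G›
  obtain ⟨n, hn⟩ := hlcs c
  exact ⟨n, le_bot_iff.1 (hc ▸ hn)⟩

theorem isPowerfullyEmbedded_powerSeq [Group.IsNilpotent G] (hp : Odd p)
    (hG : commutator G ≤ subgroupPow (⊤ : Subgroup G) p) (k : ℕ) :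
    IsPowerfullyEmbedded p (powerSeq p G k) := by
  induction k with
  | zero => exact hG
  | succ k ih => exact isPowerfullyEmbedded_subgroupPow hp ih

variable (hE : ∀ k, IsPowerfullyEmbedded p (powerSeq p G k))
include hE

theorem mk_mul_pow_of_mem_powerSeq (hp : Odd p) {k : ℕ} {x : G} (hx : x ∈ powerSeq p G k) (y : G) :
    ((x : G ⧸ powerSeq p G (k + 2)) * y) ^ p =
      (x : G ⧸ powerSeq p G (k + 2)) ^ p * (y : G ⧸ powerSeq p G (k + 2)) ^ p := by
  have hxy : ⁅x, y⁆ ∈ powerSeq p G (k + 1) := (hE k).commutatorElement_mem hx y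
  exact mk_mul_pow_of_odd hp (pow_mem_subgroupPow hxy) ((hE (k + 1)).commutatorElement_mem hxy x)
    ((hE (k + 1)).commutatorElement_mem hxy y)

theorem exists_pow_mk_eq_of_mem_powerSeq (hp : Odd p) {k : ℕ} {x : G}
    (hx : x ∈ powerSeq p G (k + 1)) :
    ∃ u ∈ powerSeq p G k, (u : G ⧸ powerSeq p G (k + 2)) ^ p = x := by
  let powHom : powerSeq p G k →* G ⧸ powerSeq p G (k + 2) :=
    MonoidHom.mk' (fun u => ((u : G) : G ⧸ powerSeq p G (k + 2)) ^ p) fun u v =>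
      mk_mul_pow_of_mem_powerSeq hE hp u.2 v
  have hle : powerSeq p G (k + 1) ≤ powHom.range.comap (QuotientGroup.mk' _) :=
    subgroupPow_le_iff.2 fun u hu => ⟨⟨u, hu⟩, rfl⟩
  obtain ⟨u, hu⟩ := hle hx
  exact ⟨u, u.2, hu⟩

theorem exists_pow_eq_of_mem_powerSeq_succ (hp : Odd p) (hL : powerSeq p G L = ⊥) {k : ℕ} {x : G}
    (hx : x ∈ powerSeq p G (k + 1)) : ∃ u ∈ powerSeq p G k, u ^ p = x := by
  -- Successive approximation: the error of a root modulo one term is a `p`-th power modulo the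
  -- next term.
  have happrox (t : ℕ) : ∃ u ∈ powerSeq p G k,
      (x : G ⧸ powerSeq p G (k + t + 2)) = (u ^ p : G) := by
    induction t with
    | zero =>
      obtain ⟨u, hu, hux⟩ := exists_pow_mk_eq_of_mem_powerSeq hE hp hx
      exact ⟨u, hu, hux.symm⟩
    | succ t ih =>
      obtain ⟨u, hu, hxu⟩ := ih
      obtain ⟨e, he, rfl⟩ := exists_mem_eq_mul_of_mk_eq hxu
      obtain ⟨v, hv, hve⟩ := exists_pow_mk_eq_of_mem_powerSeq hE hp (k := k + t + 1) he
      refine ⟨v * u, mul_mem (powerSeq_antitone (by omega) hv) hu, ?_⟩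
      rw [show k + (t + 1) + 2 = k + t + 1 + 2 by omega, QuotientGroup.mk_pow,
        QuotientGroup.mk_mul, QuotientGroup.mk_mul, mk_mul_pow_of_mem_powerSeq hE hp hv, hve,
        QuotientGroup.mk_pow]
  obtain ⟨u, hu, hxu⟩ := happrox L
  obtain ⟨e, he, rfl⟩ := exists_mem_eq_mul_of_mk_eq hxu
  have he_bot : e ∈ powerSeq p G L := powerSeq_antitone (by omega) he
  rw [hL, Subgroup.mem_bot] at he_bot
  exact ⟨u, hu, by rw [he_bot, one_mul]⟩

theorem mem_powerSeq_iff (hp : Odd p) (hL : powerSeq p G L = ⊥) {k : ℕ} {x : G} :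
    x ∈ powerSeq p G k ↔ ∃ u, u ^ p ^ k = x := by
  refine ⟨fun hx => ?_, ?_⟩
  · induction k generalizing x with
    | zero => exact ⟨x, by simp only [pow_zero, pow_one]⟩
    | succ k ih =>
      obtain ⟨v, hv, rfl⟩ := exists_pow_eq_of_mem_powerSeq_succ hE hp hL hx
      obtain ⟨u, rfl⟩ := ih hv
      exact ⟨u, by rw [pow_succ, pow_mul]⟩
  · rintro ⟨u, rfl⟩
    simpa only [zero_add] using pow_mem_powerSeq_add (k := 0) (Subgroup.mem_top u) k

theorem powerSeq_eq_subgroupPow (hp : Odd p) (hL : powerSeq p G L = ⊥) (k : ℕ) :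
    powerSeq p G k = subgroupPow ⊤ (p ^ k) := by
  refine le_antisymm (fun x hx => ?_) (subgroupPow_le_iff.2 fun u _ => ?_)
  · obtain ⟨u, rfl⟩ := (mem_powerSeq_iff hE hp hL).1 hx
    exact pow_mem_subgroupPow (Subgroup.mem_top u)
  · exact (mem_powerSeq_iff hE hp hL).2 ⟨u, rfl⟩

theorem commutator_powerSeq_le (hp : Odd p) (hL : powerSeq p G L = ⊥) (k l : ℕ) :
    ⁅powerSeq p G k, powerSeq p G l⁆ ≤ powerSeq p G (k + l + 1) := by
  induction l with
  | zero => exact hE k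
  | succ l ih =>
    refine Subgroup.commutator_le.2 fun x hx y hy => ?_
    obtain ⟨z, hz, rfl⟩ := exists_pow_eq_of_mem_powerSeq_succ hE hp hL hy
    have hxz : ⁅x, z⁆ ∈ powerSeq p G (k + l + 1) := ih (Subgroup.commutator_mem_commutator hx hz)
    exact commutatorElement_pow_right_mem (N := powerSeq p G (k + (l + 1) + 1))
      (pow_mem_subgroupPow hxz) ((hE (k + l + 1)).commutatorElement_mem hxz z)

end PowerSeq

section OmegaFiltration

variable {G : Type*} [Group G] {p M : ℕ} {V W : ℕ → Subgroup G} {k : ℕ} {x : G}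

/-- `V` is the filtration of `Ω_M(G)` by its `p ^ k`-th powers, in the strong sense that `V k` is
the set of `p ^ k`-th powers of elements of order dividing `p ^ M`. -/
def IsOmegaFiltration (p M : ℕ) (V : ℕ → Subgroup G) : Prop :=
  ∀ k x, x ∈ V k ↔ ∃ u : G, u ^ p ^ M = 1 ∧ u ^ p ^ k = x

namespace IsOmegaFiltration

theorem normal (hV : IsOmegaFiltration p M V) (k : ℕ) : (V k).Normal := by
  refine ⟨fun x hx g => ?_⟩
  obtain ⟨u, hu, rfl⟩ := (hV k x).1 hx
  exact (hV k _).2 ⟨g * u * g⁻¹, by rw [conj_pow, hu, mul_one, mul_inv_cancel], conj_pow⟩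

theorem mem_zero_iff (hV : IsOmegaFiltration p M V) : x ∈ V 0 ↔ x ^ p ^ M = 1 := by
  simp only [hV 0 x, pow_zero, pow_one, exists_eq_right]

theorem pow_mem_add (hV : IsOmegaFiltration p M V) (hx : x ∈ V k) (t : ℕ) :
    x ^ p ^ t ∈ V (k + t) := by
  obtain ⟨u, hu, rfl⟩ := (hV k x).1 hx
  exact (hV _ _).2 ⟨u, hu, by rw [pow_add, pow_mul]⟩

theorem pow_mem_succ (hV : IsOmegaFiltration p M V) (hx : x ∈ V k) : x ^ p ∈ V (k + 1) := by
  simpa only [pow_one] using hV.pow_mem_add hx 1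

theorem exists_pow_eq (hV : IsOmegaFiltration p M V) (hx : x ∈ V (k + 1)) :
    ∃ u ∈ V k, u ^ p = x := by
  obtain ⟨u, hu, rfl⟩ := (hV _ x).1 hx
  exact ⟨u ^ p ^ k, (hV _ _).2 ⟨u, hu, rfl⟩, by rw [pow_succ, pow_mul]⟩

theorem antitone (hV : IsOmegaFiltration p M V) : Antitone V := by
  refine antitone_nat_of_succ_le fun k x hx => ?_
  obtain ⟨u, hu, rfl⟩ := hV.exists_pow_eq hx
  exact pow_mem hu p

theorem eq_one_of_mem (hV : IsOmegaFiltration p M V) (hk : M ≤ k) (hx : x ∈ V k) : x = 1 := by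
  obtain ⟨u, hu, rfl⟩ := (hV k x).1 hx
  rw [← Nat.add_sub_of_le hk, pow_add, pow_mul, hu, one_pow]

theorem le_of_le {m : ℕ} (hW : IsOmegaFiltration p m W) (hV : IsOmegaFiltration p M V)
    (hmM : m ≤ M) (k : ℕ) : W k ≤ V k := by
  intro x hx
  obtain ⟨u, hu, rfl⟩ := (hW k x).1 hx
  exact (hV k _).2 ⟨u, by rw [← Nat.add_sub_of_le hmM, pow_add, pow_mul, hu, one_pow], rfl⟩

theorem mem_iff_of_le {n : ℕ} (hW : IsOmegaFiltration p (n + k) W) (hV : IsOmegaFiltration p M V)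
    (hM : n + k ≤ M) : x ∈ W k ↔ x ∈ V k ∧ x ^ p ^ n = 1 := by
  refine ⟨fun hx => ⟨hW.le_of_le hV hM k hx, ?_⟩, ?_⟩
  · exact hW.eq_one_of_mem (by omega) (hW.pow_mem_add hx n)
  · rintro ⟨hx, hxn⟩
    obtain ⟨u, -, rfl⟩ := (hV k x).1 hx
    exact (hW k _).2 ⟨u, by rwa [add_comm, pow_add, pow_mul], rfl⟩

theorem succ_le (hW : IsOmegaFiltration p M W) (hV : IsOmegaFiltration p (M + 1) V) (k : ℕ) :
    V (k + 1) ≤ W k := by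
  intro x hx
  obtain ⟨u, hu, rfl⟩ := (hV _ x).1 hx
  exact (hW k _).2 ⟨u ^ p, by rwa [← pow_mul, ← pow_succ'], by rw [← pow_mul, ← pow_succ']⟩

end IsOmegaFiltration

theorem isOmegaFiltration_powerSeq (hE : ∀ k, IsPowerfullyEmbedded p (powerSeq p G k)) (hp : Odd p)
    (hM : powerSeq p G M = ⊥) : IsOmegaFiltration p M (powerSeq p G) := by
  intro k x
  rw [mem_powerSeq_iff hE hp hM]
  refine exists_congr fun u => (and_iff_right ?_).symm
  rw [← Subgroup.mem_bot, ← hM]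
  exact (mem_powerSeq_iff hE hp hM).2 ⟨u, rfl⟩

/-- Two consecutive filtrations `V = V (M + 1)` and `W = V M` of the descending induction, with the
bracket relation between them. -/
structure IsOmegaPair (p M : ℕ) (V W : ℕ → Subgroup G) : Prop where
  left : IsOmegaFiltration p (M + 1) V
  right : IsOmegaFiltration p M W
  commutator_le : ∀ k l, ⁅V k, W l⁆ ≤ V (k + l + 1)

theorem IsOmegaPair.commutatorElement_mem (h : IsOmegaPair p M V W) {l : ℕ} {y : G}
    (hx : x ∈ V k) (hy : y ∈ W l) : ⁅x, y⁆ ∈ V (k + l + 1) :=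
  h.commutator_le k l (Subgroup.commutator_mem_commutator hx hy)

theorem IsOmegaPair.commutatorElement_pow_eq_one (hp : Odd p) {V' : ℕ → Subgroup G}
    (h : IsOmegaPair p (M + 1) V' V) {v w : G} (hv : v ∈ V' 0) (hw : w ^ p ^ M = 1) :
    ⁅v, w⁆ ^ p ^ M = 1 := by
  have hV' := h.left
  have hV := h.right
  have hwV : w ∈ V 0 := hV.mem_zero_iff.2 (by rw [pow_succ, pow_mul, hw, one_pow])
  have hcV' (t : ℕ) : ⁅v, w⁆ ^ p ^ t ∈ V' (t + 1) := by
    simpa only [add_comm] using hV'.pow_mem_add (h.commutatorElement_mem hv hwV) t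
  have hcV (t : ℕ) : ⁅v, w⁆ ^ p ^ t ∈ V t := hV.succ_le hV' t (hcV' t)
  have hwVt (t : ℕ) : w ^ p ^ t ∈ V t := by simpa only [zero_add] using hV.pow_mem_add hwV t
  have hbracket (t : ℕ) (y : G) (hy : y ∈ V t) (z : G) (hz : z ∈ V' (t + 2)) :
      ⁅z, y⁆ ∈ V' (t + 1 + 2) := hV'.antitone (by omega) (h.commutatorElement_mem hz hy)
  have (t : ℕ) : (V' (t + 2)).Normal := hV'.normal (t + 2)
  have hexpand := mk_mul_pow_pow_of_odd (N := fun t => V' (t + 2)) hp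
    (fun t z hz => hV'.pow_mem_succ hz)
    (fun t => hV'.antitone (by omega) (h.commutatorElement_mem (hcV' t) (hwVt t)))
    (fun t => hbracket t _ (hcV t)) (fun t => hbracket t _ (hwVt t)) M
  obtain ⟨e, he, hcw⟩ := exists_mem_eq_mul_of_mk_eq hexpand
  have hconj : (⁅v, w⁆ * w) ^ p ^ M = 1 := by
    rw [← conj_eq_commutatorElement_mul, ← map_pow, hw, map_one]
  rwa [hconj, hV'.eq_one_of_mem le_rfl he, hw, one_mul, mul_one, eq_comm] at hcw

theorem IsOmegaPair.commutatorElement_mem_succ (hp : Odd p) {V' : ℕ → Subgroup G}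
    (h : IsOmegaPair p (M + 1) V' V) {v w : G} (hv : v ∈ V k) (hw : w ^ p ^ M = 1) :
    ⁅v, w⁆ ∈ V (k + 1) := by
  have hV' := h.left
  have hV := h.right
  have hle := hV.le_of_le hV' (Nat.le_succ (M + 1))
  have hn := hV.normal
  induction k generalizing v with
  | zero =>
    have hwV : w ∈ V 0 := hV.mem_zero_iff.2 (by rw [pow_succ, pow_mul, hw, one_pow])
    exact (hV.mem_iff_of_le hV' (Nat.le_succ (M + 1))).2
      ⟨h.commutatorElement_mem (hle 0 hv) hwV, h.commutatorElement_pow_eq_one hp (hle 0 hv) hw⟩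
  | succ k ih =>
    obtain ⟨u, hu, rfl⟩ := hV.exists_pow_eq hv
    have hwu : ⁅w, u⁆ ∈ V (k + 1) := commutatorElement_mem_comm.1 (ih hu)
    have hwuu : ⁅⁅w, u⁆, u⁆ ∈ V' (k + 2) :=
      hV'.antitone (by omega) (h.commutatorElement_mem (hle _ hwu) hu)
    have htriple (y : G) (hy : y ∈ V 0) : ⁅⁅⁅w, u⁆, u⁆, y⁆ ∈ V (k + 2) :=
      hV.succ_le hV' (k + 2) (h.commutatorElement_mem (k := k + 2) (l := 0) hwuu hy)
    exact commutatorElement_mem_comm.1 <| commutatorElement_pow_right_mem_of_odd hp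
      (hV.pow_mem_succ hwu) (hV.pow_mem_succ (hV.succ_le hV' (k + 1) hwuu))
      (htriple _ (hV.antitone (Nat.zero_le _) hwu)) (htriple _ (hV.antitone (Nat.zero_le _) hu))

section Descent

variable (hV : IsOmegaFiltration p (M + 1) V)
  (hcomm : ∀ k, ∀ v ∈ V k, ∀ w : G, w ^ p ^ M = 1 → ⁅v, w⁆ ∈ V (k + 1))
include hV hcomm

theorem mul_pow_eq_one_of_mem (hp : Odd p) {n : ℕ} (hn : k + n = M) {x y : G} (hxV : x ∈ V k)
    (hx : x ^ p ^ n = 1) (hy : y ^ p ^ n = 1) : (x * y) ^ p ^ n = 1 := by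
  have hpow (z : G) (hz : z ^ p ^ n = 1) (t : ℕ) : (z ^ p ^ t) ^ p ^ M = 1 := by
    rw [← hn, ← pow_mul, show p ^ t * p ^ (k + n) = p ^ n * (p ^ t * p ^ k) by ring, pow_mul, hz,
      one_pow]
  have (t : ℕ) : (V (k + t + 1)).Normal := hV.normal (k + t + 1)
  have hexpand := mk_mul_pow_pow_of_odd (N := fun t => V (k + t + 1)) hp
    (fun t z hz => hV.pow_mem_succ hz)
    (fun t => hcomm _ _ (hV.pow_mem_add hxV t) _ (hpow y hy t))
    (fun t z hz => hcomm _ z hz _ (hpow x hx t)) (fun t z hz => hcomm _ z hz _ (hpow y hy t)) n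
  obtain ⟨e, he, hxy⟩ := exists_mem_eq_mul_of_mk_eq hexpand
  rwa [hV.eq_one_of_mem (by omega) he, hx, hy, one_mul, one_mul] at hxy

theorem exists_isOmegaFiltration_of_commutatorElement_mem (hp : Odd p) :
    ∃ W : ℕ → Subgroup G, IsOmegaFiltration p M W := by
  have hmul (k : ℕ) (u v : G) (hu : u ^ p ^ M = 1) (hv : v ^ p ^ M = 1) :
      ∃ z : G, z ^ p ^ M = 1 ∧ z ^ p ^ k = u ^ p ^ k * v ^ p ^ k := by
    obtain ⟨n, rfl⟩ | ⟨n, rfl⟩ : (∃ n, M = k + n) ∨ ∃ n, k = M + n :=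
      (le_total k M).imp Nat.exists_eq_add_of_le Nat.exists_eq_add_of_le
    · have hmem (z : G) (hz : z ^ p ^ (k + n) = 1) : z ^ p ^ k ∈ V k :=
        (hV k _).2 ⟨z, by rw [pow_succ, pow_mul, hz, one_pow], rfl⟩
      obtain ⟨z, -, hz⟩ := (hV k _).1 (mul_mem (hmem u hu) (hmem v hv))
      refine ⟨z, ?_, hz⟩
      rw [pow_add, pow_mul] at hu hv ⊢
      rw [hz]
      exact mul_pow_eq_one_of_mem hV hcomm hp rfl (hmem u (by rwa [pow_add, pow_mul])) hu hv
    · exact ⟨1, one_pow _, by simp only [pow_add, pow_mul, hu, hv, one_pow, one_mul]⟩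
  let W (k : ℕ) : Subgroup G :=
    { carrier := {x | ∃ u : G, u ^ p ^ M = 1 ∧ u ^ p ^ k = x}
      one_mem' := ⟨1, one_pow _, one_pow _⟩
      mul_mem' := by
        rintro _ _ ⟨u, hu, rfl⟩ ⟨v, hv, rfl⟩
        exact hmul k u v hu hv
      inv_mem' := by
        rintro _ ⟨u, hu, rfl⟩
        exact ⟨u⁻¹, by rw [inv_pow, hu, inv_one], inv_pow u _⟩ }
  exact ⟨W, fun _ _ => Iff.rfl⟩

theorem isOmegaPair_of_commutatorElement_mem (hW : IsOmegaFiltration p M W) :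
    IsOmegaPair p M V W := by
  refine ⟨hV, hW, fun k l => ?_⟩
  have hn := hV.normal
  have hpow {l : ℕ} {w : G} (hw : w ∈ W l) : w ^ p ^ M = 1 :=
    hW.mem_zero_iff.1 (hW.antitone (Nat.zero_le l) hw)
  induction l with
  | zero => exact Subgroup.commutator_le.2 fun v hv w hw => hcomm k v hv w (hpow hw)
  | succ l ih =>
    refine Subgroup.commutator_le.2 fun v hv w hw => ?_
    obtain ⟨u, hu, rfl⟩ := hW.exists_pow_eq hw
    have hvu : ⁅v, u⁆ ∈ V (k + l + 1) := ih (Subgroup.commutator_mem_commutator hv hu)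
    exact commutatorElement_pow_right_mem (N := V (k + (l + 1) + 1)) (hV.pow_mem_succ hvu)
      (hcomm _ _ hvu u (hpow hu))

end Descent

theorem exists_isOmegaPair (hE : ∀ k, IsPowerfullyEmbedded p (powerSeq p G k)) (hp : Odd p)
    {L : ℕ} (hL : powerSeq p G L = ⊥) (M : ℕ) : ∃ V W : ℕ → Subgroup G, IsOmegaPair p M V W := by
  have hdescent (t : ℕ) : ∀ M, L ≤ M + t → ∃ V W : ℕ → Subgroup G, IsOmegaPair p M V W := by
    induction t with
    | zero =>
      intro M hM
      exact ⟨powerSeq p G, powerSeq p G, isOmegaFiltration_powerSeq hE hp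
          (powerSeq_eq_bot_of_le (by omega) hL),
        isOmegaFiltration_powerSeq hE hp (powerSeq_eq_bot_of_le hM hL),
        commutator_powerSeq_le hE hp hL⟩
    | succ t ih =>
      intro M hM
      obtain ⟨V', V, h⟩ := ih (M + 1) (by omega)
      have hcomm (k : ℕ) (v : G) (hv : v ∈ V k) (w : G) (hw : w ^ p ^ M = 1) :
          ⁅v, w⁆ ∈ V (k + 1) := h.commutatorElement_mem_succ hp hv hw
      obtain ⟨W, hW⟩ := exists_isOmegaFiltration_of_commutatorElement_mem h.right hcomm hp
      exact ⟨V, W, isOmegaPair_of_commutatorElement_mem h.right hcomm hW⟩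
  exact hdescent L M (Nat.le_add_left L M)

theorem omegaSubgroup_subgroupPow (hE : ∀ k, IsPowerfullyEmbedded p (powerSeq p G k)) (hp : Odd p)
    {L n : ℕ} (hL : powerSeq p G L = ⊥) (hW : IsOmegaFiltration p (n + k) W) :
    omegaSubgroup p n (subgroupPow ⊤ (p ^ k)) = W k := by
  have hV : IsOmegaFiltration p (n + k + L) (powerSeq p G) :=
    isOmegaFiltration_powerSeq hE hp (powerSeq_eq_bot_of_le (by omega) hL)
  have hcoe : {x | x ∈ subgroupPow ⊤ (p ^ k) ∧ x ^ p ^ n = 1} = (W k : Set G) := by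
    ext x
    rw [← powerSeq_eq_subgroupPow hE hp hL k]
    exact (hW.mem_iff_of_le hV (by omega)).symm
  rw [omegaSubgroup, hcoe, Subgroup.closure_eq]

end OmegaFiltration

theorem omega_statement_8_general {p : ℕ} (hp : Odd p) {G : Type*} [Group G] [Group.IsNilpotent G]
    {L : ℕ} (hexp : ∀ g : G, g ^ p ^ L = 1) (hpow : IsPowerful p G) {i j : ℕ} (hj : j ≤ i) :
    ⁅omegaSubgroup p (i - j) (subgroupPow (⊤ : Subgroup G) (p ^ (2 + j))),
        omegaSubgroup p i (subgroupPow (⊤ : Subgroup G) p)⁆ ≤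
      subgroupPow (omegaSubgroup p i (subgroupPow (⊤ : Subgroup G) (p ^ 2))) (p ^ (j + 2)) := by
  have hcomm : commutator G ≤ subgroupPow ⊤ p := by
    rwa [IsPowerful, if_neg (hp.ne_two_of_dvd_nat dvd_rfl)] at hpow
  have hE := isPowerfullyEmbedded_powerSeq hp hcomm
  obtain ⟨n, hn⟩ := exists_powerSeq_eq_bot hexp
  obtain ⟨V, W, h⟩ := exists_isOmegaPair hE hp hn (i + 1)
  have hV : IsOmegaFiltration p (i - j + (2 + j)) V := by
    rw [show i - j + (2 + j) = i + 1 + 1 by omega]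
    exact h.left
  have hΩ₂ := omegaSubgroup_subgroupPow (k := 2) (n := i) hE hp hn h.left
  have hΩ₁ := omegaSubgroup_subgroupPow (k := 1) (n := i) hE hp hn h.right
  rw [pow_one] at hΩ₁
  rw [omegaSubgroup_subgroupPow hE hp hn hV, hΩ₁, hΩ₂]
  refine (h.commutator_le (2 + j) 1).trans fun x hx => ?_
  rw [show 2 + j + 1 + 1 = 2 + (j + 2) by omega] at hx
  obtain ⟨u, hu, rfl⟩ := (h.left _ x).1 hx
  rw [pow_add p 2 (j + 2), pow_mul]
  exact pow_mem_subgroupPow ((h.left 2 _).2 ⟨u, hu, rfl⟩)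

theorem omega_statement_8 (p : ℕ) (hp : p.Prime) (hp2 : p ≠ 2) (G : Type*) [Group G]
    [Finite G] (hG : IsPGroup p G) (hpow : IsPowerful p G) (i j : ℕ) (hi : 1 ≤ i)
    (hj : j ≤ i) :
    ⁅omegaSubgroup p (i - j) (subgroupPow (⊤ : Subgroup G) (p ^ (2 + j))),
        omegaSubgroup p i (subgroupPow (⊤ : Subgroup G) p)⁆ ≤
      subgroupPow (omegaSubgroup p i (subgroupPow (⊤ : Subgroup G) (p ^ 2)))
        (p ^ (j + 2)) := by
  have := Fact.mk hp
  have := hG.isNilpotent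
  obtain ⟨L, hL⟩ := IsPGroup.iff_card.1 hG
  exact omega_statement_8_general (hp.odd_of_ne_two hp2) (fun g => hL ▸ pow_card_eq_one') hpow hj
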